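/- Conic reformulation of logistic loss minimization: the infimum of L(x) over x ∈ ℝ^n equals the infimum of (1/m) Σ_{i=1}^m s_i over all x ∈ ℝ^n and s, u, v ∈ ℝ^m satisfying, for every i = 1,…,m, u_i ≥ exp(−y_i (A x)_i − s_i), v_i ≥ exp(−s_i), and u_i + v_i ≤ 1. -/

import Mathlib

/-- The logistic loss `L(x) = (1/m) ∑ᵢ log (1 + exp (-yᵢ (A x)ᵢ))`. -/
noncomputable def logLoss (m n : ℕ) (A : Fin m → Fin n → ℝ) (y : Fin m → ℝ)
    (x : Fin n → ℝ) : ℝ :=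
  (1 / (m : ℝ)) * ∑ i, Real.log (1 + Real.exp (-(y i) * ∑ j, A i j * x j))

/-- Conic reformulation of logistic loss minimization: the infimum of `L(x)` over
`x ∈ ℝ^n` equals the infimum of `(1/m) ∑ᵢ sᵢ` over all `x ∈ ℝ^n` and `s, u, v ∈ ℝ^m`
satisfying `uᵢ ≥ exp (-yᵢ (A x)ᵢ - sᵢ)`, `vᵢ ≥ exp (-sᵢ)`, and `uᵢ + vᵢ ≤ 1`. -/
theorem logLoss_conic_reformulation (m n : ℕ) (hm : 0 < m) (hn : 0 < n)
    (A : Fin m → Fin n → ℝ) (y : Fin m → ℝ) (hy : ∀ i, y i = 1 ∨ y i = -1) :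
    sInf {w : ℝ | ∃ x : Fin n → ℝ, w = logLoss m n A y x} =
    sInf {w : ℝ | ∃ (x : Fin n → ℝ) (s u v : Fin m → ℝ),
      (∀ i, Real.exp (-(y i) * (∑ j, A i j * x j) - s i) ≤ u i) ∧
      (∀ i, Real.exp (-(s i)) ≤ v i) ∧
      (∀ i, u i + v i ≤ 1) ∧
      w = (1 / (m : ℝ)) * ∑ i, s i} := by
  have hpos : ∀ x, 0 ≤ logLoss m n A y x := by
    intro x
    unfold logLoss
    refine mul_nonneg (by positivity) (Finset.sum_nonneg fun i _ => Real.log_nonneg ?_)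
    have := Real.exp_pos (-(y i) * ∑ j, A i j * x j)
    linarith
  have key : ∀ w ∈ {w : ℝ | ∃ (x : Fin n → ℝ) (s u v : Fin m → ℝ),
      (∀ i, Real.exp (-(y i) * (∑ j, A i j * x j) - s i) ≤ u i) ∧
      (∀ i, Real.exp (-(s i)) ≤ v i) ∧
      (∀ i, u i + v i ≤ 1) ∧
      w = (1 / (m : ℝ)) * ∑ i, s i}, ∃ x, logLoss m n A y x ≤ w := by
    rintro w ⟨x, s, u, v, hu, hv, huv, rfl⟩
    refine ⟨x, ?_⟩
    unfold logLoss
    refine mul_le_mul_of_nonneg_left (Finset.sum_le_sum fun i _ => ?_) (by positivity)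
    have h1 := hu i
    have h2 := hv i
    have h3 := huv i
    rw [Real.log_le_iff_le_exp (by positivity)]
    rw [Real.exp_sub] at h1
    rw [Real.exp_neg] at h2
    have hs := Real.exp_pos (s i)
    have h4 : (1 + Real.exp (-(y i) * ∑ j, A i j * x j)) / Real.exp (s i) ≤ 1 := by
      rw [add_div, one_div]
      linarith
    rwa [div_le_one hs] at h4
  have sub : ∀ x, ∃ (x' : Fin n → ℝ) (s u v : Fin m → ℝ),
      (∀ i, Real.exp (-(y i) * (∑ j, A i j * x' j) - s i) ≤ u i) ∧
      (∀ i, Real.exp (-(s i)) ≤ v i) ∧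
      (∀ i, u i + v i ≤ 1) ∧
      logLoss m n A y x = (1 / (m : ℝ)) * ∑ i, s i := by
    intro x
    let s : Fin m → ℝ := fun i => Real.log (1 + Real.exp (-(y i) * ∑ j, A i j * x j))
    refine ⟨x, s, fun i => Real.exp (-(y i) * (∑ j, A i j * x j) - s i),
      fun i => Real.exp (-(s i)), fun i => le_rfl, fun i => le_rfl, fun i => ?_, rfl⟩
    have hp : 0 < 1 + Real.exp (-(y i) * ∑ j, A i j * x j) := by positivity
    have hs : Real.exp (s i) = 1 + Real.exp (-(y i) * ∑ j, A i j * x j) := Real.exp_log hp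
    show Real.exp (-(y i) * (∑ j, A i j * x j) - s i) + Real.exp (-(s i)) ≤ 1
    rw [Real.exp_sub, Real.exp_neg, hs, ← one_div, ← add_div, div_le_one hp]
    linarith
  apply le_antisymm
  · refine le_csInf ⟨_, sub 0⟩ fun w hw => ?_
    obtain ⟨x, hx⟩ := key w hw
    refine le_trans (csInf_le ⟨0, ?_⟩ ⟨x, rfl⟩) hx
    rintro _ ⟨x, rfl⟩
    exact hpos x
  · refine le_csInf ⟨_, 0, rfl⟩ ?_
    rintro _ ⟨x, rfl⟩
    refine csInf_le ⟨0, fun w hw => ?_⟩ (sub x)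
    obtain ⟨x, hx⟩ := key w hw
    exact (hpos x).trans hx
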